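/- arXiv:1710.07973 — 5 statements merged into one kernel-verified Lean document; each statement's English description precedes it below -/
import Mathlib

section
/- Let n ≥ 2 and 1 ≤ k ≤ n be integers. Every finite set U ⊆ ℝ^n that is shattered by the family H_k^n of half-spaces generated by k-sparse vectors satisfies |U| ≤ 2·k·lg(n·e); in particular, the VC-dimension of H_k^n is at most ⌊2k·lg(ne)⌋. -/
open Real

noncomputable section

/-- A vector `x : ℝ^n` is `k`-sparse if it has at most `k` nonzero components. -/
def sparse (n k : ℕ) (x : Fin n → ℝ) : Prop :=
  ∃ s : Finset (Fin n), s.card ≤ k ∧ ∀ i ∉ s, x i = 0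

/-- The half-space generated by `x`. -/
def halfSpace (n : ℕ) (x : Fin n → ℝ) : Set (Fin n → ℝ) :=
  {a | 0 ≤ ∑ i, a i * x i}

/-- A finite set `U` is shattered by a family `C` of subsets. -/
def Shatters {X : Type*} (C : Set (Set X)) (U : Finset X) : Prop :=
  ∀ B ⊆ U, ∃ A ∈ C, A ∩ (U : Set X) = (B : Set X)

/-!
A `k`-sparse half-space comes from a linear functional in the span of some `k` coordinates, so
`H_k^n` is a union of `n.choose k` families, each consisting of the sets `{x | 0 ≤ f x}` for `f` in
a space of functions of dimension at most `k`. Such a family shatters no set of more than `k`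
points: on more points there is a linear relation `∑ c u * f u = 0` satisfied by all these `f`,
where `c` may be taken to have a negative value, and it fails for an `f` with the same signs as `c`.
By Sauer-Shelah, a shattered set of size `m ≥ k` thus satisfies
`2 ^ m ≤ n.choose k * ∑ i ≤ k, m.choose i ≤ (n * (e * m / k)) ^ k`. With `t = m / k` and
`a = n * e` this is `2 ^ t ≤ a * t`; since `t < 2 ^ (t / 2)` for `t > 4`, it forces
`t ≤ 2 * logb 2 a`.
-/

section Traces

variable {X ι : Type*} {C D : Set (Set X)} {U : Finset X}

theorem Shatters.mono (hU : Shatters C U) (hCD : C ⊆ D) : Shatters D U := fun B hB ↦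
  let ⟨A, hA, hAB⟩ := hU B hB
  ⟨A, hCD hA, hAB⟩

open Classical in
/-- The trace of the set family `C` on the finite set `U`: the intersections `A ∩ U` with `A ∈ C`,
encoded as a finite family of finite sets so that the Sauer-Shelah lemma applies to it. -/
def traceOn (C : Set (Set X)) (U : Finset X) : Finset (Finset X) :=
  {B ∈ U.powerset | ∃ A ∈ C, A ∩ (U : Set X) = (B : Set X)}

theorem mem_traceOn {B : Finset X} :
    B ∈ traceOn C U ↔ B ⊆ U ∧ ∃ A ∈ C, A ∩ (U : Set X) = (B : Set X) := by
  simp only [traceOn, Finset.mem_filter, Finset.mem_powerset]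

theorem Shatters.traceOn_eq_powerset (hU : Shatters C U) : traceOn C U = U.powerset := by
  ext B
  rw [mem_traceOn, Finset.mem_powerset]
  exact and_iff_left_of_imp (hU B)

theorem card_traceOn_biUnion_le (s : Finset ι) (C : ι → Set (Set X)) (U : Finset X) :
    (traceOn (⋃ i ∈ s, C i) U).card ≤ ∑ i ∈ s, (traceOn (C i) U).card := by
  classical
  have hsub : traceOn (⋃ i ∈ s, C i) U ⊆ s.biUnion fun i ↦ traceOn (C i) U := by
    intro B hB
    obtain ⟨hBU, A, hA, hAB⟩ := mem_traceOn.1 hB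
    obtain ⟨i, hi, hAi⟩ := Set.mem_iUnion₂.1 hA
    exact Finset.mem_biUnion.2 ⟨i, hi, mem_traceOn.2 ⟨hBU, A, hAi, hAB⟩⟩
  exact (Finset.card_le_card hsub).trans Finset.card_biUnion_le

theorem subset_and_shatters_of_shatters_traceOn [DecidableEq X] {T : Finset X}
    (hT : (traceOn C U).Shatters T) : T ⊆ U ∧ Shatters C T := by
  obtain ⟨B, hB, hTB⟩ := hT.exists_superset
  have hTU : T ⊆ U := hTB.trans (mem_traceOn.1 hB).1
  refine ⟨hTU, fun S hS ↦ ?_⟩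
  obtain ⟨R, hR, rfl⟩ := hT hS
  obtain ⟨-, A, hA, hAR⟩ := mem_traceOn.1 hR
  refine ⟨A, hA, ?_⟩
  rw [Finset.coe_inter, ← hAR, Set.inter_left_comm,
    Set.inter_eq_left.2 (Finset.coe_subset.2 hTU)]

theorem card_traceOn_le_sum_choose {d : ℕ} (hd : ∀ T ⊆ U, Shatters C T → T.card ≤ d) :
    (traceOn C U).card ≤ ∑ i ∈ Finset.range (d + 1), U.card.choose i := by
  classical
  have hsub : (traceOn C U).shatterer ⊆
      (Finset.range (d + 1)).biUnion fun i ↦ U.powersetCard i := by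
    intro T hT
    obtain ⟨hTU, hT⟩ := subset_and_shatters_of_shatters_traceOn (Finset.mem_shatterer.1 hT)
    exact Finset.mem_biUnion.2 ⟨T.card, Finset.mem_range_succ_iff.2 (hd T hTU hT),
      Finset.mem_powersetCard.2 ⟨hTU, rfl⟩⟩
  calc (traceOn C U).card
      ≤ (traceOn C U).shatterer.card := Finset.card_le_card_shatterer _
    _ ≤ _ := Finset.card_le_card hsub
    _ ≤ ∑ i ∈ Finset.range (d + 1), (U.powersetCard i).card := Finset.card_biUnion_le
    _ = ∑ i ∈ Finset.range (d + 1), U.card.choose i := by simp only [Finset.card_powersetCard]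

theorem Shatters.two_pow_card_le_of_biUnion {d : ℕ} {s : Finset ι} {C : ι → Set (Set X)}
    (hd : ∀ i ∈ s, ∀ T ⊆ U, Shatters (C i) T → T.card ≤ d) (hU : Shatters (⋃ i ∈ s, C i) U) :
    2 ^ U.card ≤ s.card * ∑ i ∈ Finset.range (d + 1), U.card.choose i :=
  calc 2 ^ U.card
      = (traceOn (⋃ i ∈ s, C i) U).card := by rw [hU.traceOn_eq_powerset, Finset.card_powerset]
    _ ≤ ∑ i ∈ s, (traceOn (C i) U).card := card_traceOn_biUnion_le s C U
    _ ≤ s.card • _ := Finset.sum_le_card_nsmul _ _ _ fun i hi ↦ card_traceOn_le_sum_choose (hd i hi)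

end Traces

section NonnegSets

open Module

/-- The sets `{x | 0 ≤ f x}` for `f` in a family `F` of functions; half-spaces through the origin
arise from linear functionals. -/
def nonnegSets {X R : Type*} [Zero R] [LE R] (F : Set (X → R)) : Set (Set X) :=
  (fun f ↦ {x | 0 ≤ f x}) '' F

variable {K X : Type*} [Field K]

theorem exists_sum_mul_eq_zero_of_finrank_lt_card (V : Submodule K (X → K)) [FiniteDimensional K V]
    {U : Finset X} (hVU : finrank K V < U.card) :
    ∃ c : X → K, (∃ u ∈ U, c u ≠ 0) ∧ ∀ f ∈ V, ∑ u ∈ U, c u * f u = 0 := by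
  let eval (x : X) : Dual K V := LinearMap.proj x ∘ₗ V.subtype
  have hdep : ¬ LinearIndepOn K eval (U : Set X) := fun hindep ↦ by
    have hcard : Fintype.card U ≤ finrank K (Dual K V) :=
      LinearIndependent.fintype_card_le_finrank hindep
    rw [Subspace.dual_finrank_eq, Fintype.card_coe] at hcard
    exact hcard.not_gt hVU
  obtain ⟨c, hc, u, hu, hcu⟩ := not_linearIndepOn_finset_iff.1 hdep
  refine ⟨c, ⟨u, hu, hcu⟩, fun f hf ↦ ?_⟩
  simpa [eval] using LinearMap.congr_fun hc ⟨f, hf⟩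

variable [LinearOrder K] [IsStrictOrderedRing K]

theorem sum_mul_pos_of_nonneg_iff_nonneg {U : Finset X} {c f : X → K}
    (hcf : ∀ u ∈ U, 0 ≤ f u ↔ 0 ≤ c u) (hc : ∃ u ∈ U, c u < 0) : 0 < ∑ u ∈ U, c u * f u := by
  have hpos : ∀ u ∈ U, c u < 0 → 0 < c u * f u := fun u hu hcu ↦
    mul_pos_of_neg_of_neg hcu (not_le.1 fun hfu ↦ hcu.not_ge ((hcf u hu).1 hfu))
  obtain ⟨u, hu, hcu⟩ := hc
  refine Finset.sum_pos' (fun v hv ↦ ?_) ⟨u, hu, hpos u hu hcu⟩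
  obtain hcv | hcv := le_or_gt 0 (c v)
  · exact mul_nonneg hcv ((hcf v hv).2 hcv)
  · exact (hpos v hv hcv).le

theorem Shatters.card_le_finrank {V : Submodule K (X → K)} [FiniteDimensional K V] {U : Finset X}
    (hU : Shatters (nonnegSets (V : Set (X → K))) U) : U.card ≤ finrank K V := by
  by_contra! hVU
  obtain ⟨c, ⟨u, hu, hcu⟩, hc⟩ := exists_sum_mul_eq_zero_of_finrank_lt_card V hVU
  wlog hneg : c u < 0 generalizing c
  · exact this (-c) (by simpa using hc) (by simpa using hcu)
      (by simpa using hcu.lt_or_gt.resolve_left hneg)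
  obtain ⟨_, ⟨f, hf, rfl⟩, hfB⟩ := hU {v ∈ U | 0 ≤ c v} (Finset.filter_subset _ U)
  have hsign : ∀ v ∈ U, 0 ≤ f v ↔ 0 ≤ c v := fun v hv ↦ by
    simpa [hv] using Set.ext_iff.1 hfB v
  exact (sum_mul_pos_of_nonneg_iff_nonneg hsign ⟨u, hu, hneg⟩).ne' (hc f hf)

end NonnegSets

section SparseHalfSpaces

variable {n k : ℕ}

/-- The linear functionals on `ℝ^n` that depend only on the coordinates in `s`, as a space of
functions: those generating the half-spaces `H(x)` with `x` supported on `s`. -/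
def coordinateSpan (s : Finset (Fin n)) : Submodule ℝ ((Fin n → ℝ) → ℝ) :=
  Submodule.span ℝ (Set.range fun (i : s) (a : Fin n → ℝ) ↦ a i)

instance (s : Finset (Fin n)) : FiniteDimensional ℝ (coordinateSpan s) :=
  FiniteDimensional.span_of_finite ℝ (Set.finite_range _)

theorem finrank_coordinateSpan_le (s : Finset (Fin n)) :
    Module.finrank ℝ (coordinateSpan s) ≤ s.card :=
  (finrank_range_le_card _).trans_eq (Fintype.card_coe s)

theorem halfSpace_mem_nonnegSets_coordinateSpan {s : Finset (Fin n)} {x : Fin n → ℝ}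
    (hx : ∀ i ∉ s, x i = 0) :
    halfSpace n x ∈ nonnegSets (coordinateSpan s : Set ((Fin n → ℝ) → ℝ)) := by
  refine ⟨∑ i, x i • fun a ↦ a i, Submodule.sum_mem _ fun i _ ↦ ?_, ?_⟩
  · by_cases hi : i ∈ s
    · exact Submodule.smul_mem _ _ (Submodule.subset_span ⟨⟨i, hi⟩, rfl⟩)
    · rw [hx i hi, zero_smul]
      exact Submodule.zero_mem _
  · ext a
    simp [halfSpace, mul_comm]

theorem sparse_halfSpaces_subset_biUnion (hkn : k ≤ n) :
    {H | ∃ x : Fin n → ℝ, sparse n k x ∧ H = halfSpace n x} ⊆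
      ⋃ s ∈ (Finset.univ : Finset (Fin n)).powersetCard k,
        nonnegSets (coordinateSpan s : Set ((Fin n → ℝ) → ℝ)) := by
  rintro _ ⟨x, ⟨s, hs, hx⟩, rfl⟩
  obtain ⟨t, hst, ht⟩ := Finset.exists_superset_card_eq hs (by simpa using hkn)
  exact Set.mem_biUnion (Finset.mem_powersetCard_univ.2 ht)
    (halfSpace_mem_nonnegSets_coordinateSpan fun i hi ↦ hx i fun his ↦ hi (hst his))

theorem Shatters.two_pow_card_le_of_sparse (hkn : k ≤ n) {U : Finset (Fin n → ℝ)}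
    (hU : Shatters {H | ∃ x : Fin n → ℝ, sparse n k x ∧ H = halfSpace n x} U) :
    2 ^ U.card ≤ n.choose k * ∑ i ∈ Finset.range (k + 1), U.card.choose i := by
  have hdim : ∀ s ∈ (Finset.univ : Finset (Fin n)).powersetCard k, ∀ T ⊆ U,
      Shatters (nonnegSets (coordinateSpan s : Set ((Fin n → ℝ) → ℝ))) T → T.card ≤ k := by
    intro s hs T _ hT
    rw [← (Finset.mem_powersetCard.1 hs).2]
    exact hT.card_le_finrank.trans (finrank_coordinateSpan_le s)
  simpa using (hU.mono (sparse_halfSpaces_subset_biUnion hkn)).two_pow_card_le_of_biUnion hdim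

end SparseHalfSpaces

section Estimates

theorem sum_choose_mul_pow_le_add_one_pow {r : ℝ} (hr₀ : 0 ≤ r) (hr₁ : r ≤ 1) {m k : ℕ}
    (hkm : k ≤ m) : (∑ i ∈ Finset.range (k + 1), (m.choose i : ℝ)) * r ^ k ≤ (r + 1) ^ m :=
  calc (∑ i ∈ Finset.range (k + 1), (m.choose i : ℝ)) * r ^ k
      = ∑ i ∈ Finset.range (k + 1), r ^ k * m.choose i := by rw [mul_comm, Finset.mul_sum]
    _ ≤ ∑ i ∈ Finset.range (k + 1), r ^ i * m.choose i := by
        refine Finset.sum_le_sum fun i hi ↦ mul_le_mul_of_nonneg_right ?_ (Nat.cast_nonneg _)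
        exact pow_le_pow_of_le_one hr₀ hr₁ (Finset.mem_range_succ_iff.1 hi)
    _ ≤ ∑ i ∈ Finset.range (m + 1), r ^ i * m.choose i := by
        refine Finset.sum_le_sum_of_subset_of_nonneg ?_ fun i _ _ ↦ by positivity
        exact Finset.range_subset_range.2 (by gcongr)
    _ = (r + 1) ^ m := by simp [add_pow]

theorem sum_choose_le_exp_one_mul_div_pow {m k : ℕ} (hk : k ≠ 0) (hkm : k ≤ m) :
    ∑ i ∈ Finset.range (k + 1), (m.choose i : ℝ) ≤ (exp 1 * (m / k)) ^ k := by
  have hk₀ : (0 : ℝ) < k := by positivity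
  have hm₀ : (0 : ℝ) < m := hk₀.trans_le (Nat.cast_le.2 hkm)
  have hr₁ : (k / m : ℝ) ≤ 1 := (div_le_one hm₀).2 (Nat.cast_le.2 hkm)
  have hinv : (exp 1 * (m / k : ℝ)) ^ k = exp 1 ^ k / (k / m : ℝ) ^ k := by
    rw [← div_pow, div_div_eq_mul_div, mul_div_assoc]
  rw [hinv, le_div_iff₀ (by positivity)]
  calc (∑ i ∈ Finset.range (k + 1), (m.choose i : ℝ)) * (k / m : ℝ) ^ k
      ≤ (k / m + 1 : ℝ) ^ m := sum_choose_mul_pow_le_add_one_pow (by positivity) hr₁ hkm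
    _ ≤ exp (k / m) ^ m := by gcongr; exact add_one_le_exp _
    _ = exp 1 ^ k := by
        rw [← exp_nat_mul, ← exp_nat_mul, mul_div_cancel₀ _ hm₀.ne', mul_one]

theorem rpow_div_le_of_pow_le_pow {b c : ℝ} {m k : ℕ} (hb : 0 ≤ b) (hc : 0 ≤ c) (hk : k ≠ 0)
    (h : b ^ m ≤ c ^ k) : b ^ (m / k : ℝ) ≤ c := by
  rw [div_eq_mul_inv, rpow_mul hb, rpow_natCast, rpow_inv_le_iff_of_pos (by positivity) hc
    (by positivity), rpow_natCast]
  exact h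

theorem lt_two_rpow_div_two {t : ℝ} (ht : 4 < t) : t < 2 ^ (t / 2) := by
  have hexp : (2 : ℝ) ^ (t / 2) = 4 * exp (log 2 * (t / 2 - 2)) := by
    rw [← rpow_def_of_pos two_pos, rpow_sub two_pos, rpow_two]
    ring
  have htangent := add_one_le_exp (log 2 * (t / 2 - 2))
  have hlog : 1 / 2 < log 2 := by linarith [log_two_gt_d9]
  rw [hexp]
  nlinarith

theorem two_le_logb_of_four_le {a : ℝ} (ha : 4 ≤ a) : 2 ≤ logb 2 a := by
  rw [le_logb_iff_rpow_le one_lt_two (by linarith), rpow_two]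
  linarith

theorem le_two_mul_logb_of_two_rpow_le_mul {a t : ℝ} (ha : 4 ≤ a) (h : 2 ^ t ≤ a * t) :
    t ≤ 2 * logb 2 a := by
  by_contra! hlt
  have hlog : 2 ≤ logb 2 a := two_le_logb_of_four_le ha
  have hat : a < 2 ^ (t / 2) := by
    rw [← logb_lt_iff_lt_rpow one_lt_two (by linarith)]
    linarith
  have htt : t < 2 ^ (t / 2) := lt_two_rpow_div_two (by linarith)
  refine h.not_gt ?_
  calc a * t < 2 ^ (t / 2) * 2 ^ (t / 2) := mul_lt_mul'' hat htt (by linarith) (by linarith)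
    _ = 2 ^ t := by rw [← rpow_add two_pos, add_halves]

theorem two_rpow_div_le_of_two_pow_le_choose_mul {n k m : ℕ} (hk : k ≠ 0) (hkm : k ≤ m)
    (h : 2 ^ m ≤ n.choose k * ∑ i ∈ Finset.range (k + 1), m.choose i) :
    (2 : ℝ) ^ (m / k : ℝ) ≤ n * exp 1 * (m / k) := by
  refine rpow_div_le_of_pow_le_pow zero_le_two (by positivity) hk ?_
  calc (2 : ℝ) ^ m
      ≤ n.choose k * ∑ i ∈ Finset.range (k + 1), (m.choose i : ℝ) := by exact_mod_cast h
    _ ≤ n ^ k * (exp 1 * (m / k)) ^ k := by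
        gcongr
        · exact_mod_cast n.choose_le_pow k
        · exact sum_choose_le_exp_one_mul_div_pow hk hkm
    _ = (n * exp 1 * (m / k)) ^ k := by rw [← mul_pow, mul_assoc]

end Estimates

theorem vc_upper_bound (n k : ℕ) (hn : 2 ≤ n) (hk1 : 1 ≤ k) (hkn : k ≤ n)
    (U : Finset (Fin n → ℝ))
    (hU : Shatters {H | ∃ x : Fin n → ℝ, sparse n k x ∧ H = halfSpace n x} U) :
    (U.card : ℝ) ≤ 2 * k * logb 2 (n * Real.exp 1) := by
  have hk₀ : (0 : ℝ) < k := by exact_mod_cast hk1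
  have ha : 4 ≤ n * exp 1 := by
    have hn' : (2 : ℝ) ≤ n := by exact_mod_cast hn
    nlinarith [exp_one_gt_d9]
  suffices hratio : (U.card / k : ℝ) ≤ 2 * logb 2 (n * exp 1) by
    rw [div_le_iff₀ hk₀] at hratio
    linarith
  obtain hkU | hUk := le_total k U.card
  · exact le_two_mul_logb_of_two_rpow_le_mul ha (two_rpow_div_le_of_two_pow_le_choose_mul
      (Nat.pos_iff_ne_zero.1 hk1) hkU (hU.two_pow_card_le_of_sparse hkn))
  · have hratio₁ : (U.card / k : ℝ) ≤ 1 := (div_le_one hk₀).2 (Nat.cast_le.2 hUk)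
    linarith [two_le_logb_of_four_le ha]
end
end

section
/- Let 1 ≤ k ≤ n be integers. There exists a finite set U ⊆ ℝ^n of cardinality k·(⌊lg(n/k)⌋ + 1) that is shattered by the family H_k^n of half-spaces generated by k-sparse vectors; in particular, the VC-dimension of H_k^n is at least k·(⌊lg(n/k)⌋ + 1). -/
open Real

noncomputable section

/-! List all `2 ^ m` sign patterns of length `m` with a leading `+1` as the columns of an
`(m + 1) × 2 ^ m` matrix. Up to a global sign, every pattern of length `m + 1` is one of these
columns, so the `m + 1` rows are shattered by half-spaces generated by multiples of single basis
vectors. Taking `k` copies on disjoint blocks of coordinates, which fit into `ℝ^n` once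
`k * 2 ^ m ≤ n`, gives `k * (m + 1)` vectors shattered by `k`-sparse ones. -/

section Shattering

variable {ι X : Type*} {C : Set (Set X)} {u : ι → X}

theorem injective_of_forall_exists_preimage_eq (hu : ∀ B : Set ι, ∃ A ∈ C, u ⁻¹' A = B) :
    Function.Injective u := by
  intro p q hpq
  obtain ⟨A, -, hA⟩ := hu {q}
  have hq : u q ∈ A := by simp [← Set.mem_preimage, hA]
  have hp : p ∈ u ⁻¹' A := by rwa [Set.mem_preimage, hpq]
  rwa [hA] at hp

theorem exists_shatters_of_forall_exists_preimage_eq [Fintype ι]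
    (hu : ∀ B : Set ι, ∃ A ∈ C, u ⁻¹' A = B) :
    ∃ U : Finset X, U.card = Fintype.card ι ∧ Shatters C U := by
  refine ⟨Finset.univ.map ⟨u, injective_of_forall_exists_preimage_eq hu⟩, by simp, ?_⟩
  intro B hB
  obtain ⟨A, hAC, hA⟩ := hu (u ⁻¹' B)
  have hBu : (B : Set X) ⊆ Set.range u := by simpa [← Finset.coe_subset] using hB
  refine ⟨A, hAC, ?_⟩
  calc A ∩ ↑(Finset.univ.map ⟨u, _⟩) = A ∩ Set.range u := by simp
    _ = u '' (u ⁻¹' A) := Set.image_preimage_eq_inter_range.symm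
    _ = u '' (u ⁻¹' B) := by rw [hA]
    _ = B := Set.image_preimage_eq_of_subset hBu

end Shattering

section SparseHalfSpaces

variable {n : ℕ} {ι : Type*} [Fintype ι]

/-- The family `H_k^n` of half-spaces of `ℝ^n` generated by `k`-sparse vectors. -/
def sparseHalfSpaces (n k : ℕ) : Set (Set (Fin n → ℝ)) :=
  {H | ∃ x : Fin n → ℝ, sparse n k x ∧ H = halfSpace n x}

theorem sparse_sum_single (f : ι → Fin n) (c : ι → ℝ) :
    sparse n (Fintype.card ι) (∑ j, Pi.single (f j) (c j)) := by
  refine ⟨Finset.univ.image f, Finset.card_image_le, fun i hi => ?_⟩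
  rw [Finset.sum_apply]
  have hne (j : ι) : i ≠ f j := fun hij => hi (by simp [hij])
  exact Finset.sum_eq_zero fun j _ => Pi.single_eq_of_ne (hne j) _

theorem mem_halfSpace_sum_single (a : Fin n → ℝ) (f : ι → Fin n) (c : ι → ℝ) :
    a ∈ halfSpace n (∑ j, Pi.single (f j) (c j)) ↔ 0 ≤ ∑ j, a (f j) * c j := by
  change 0 ≤ a ⬝ᵥ ∑ j, Pi.single (f j) (c j) ↔ _
  simp only [dotProduct_sum, dotProduct_single]

end SparseHalfSpaces

section Blocks

variable {n : ℕ} {ι σ τ : Type*}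

/-- The copy of `v` on the `j`-th block of coordinates of `ℝ^n`, zero elsewhere. The blocks are
indexed by `ι` and the positions inside a block by `σ`, and `e` places them in `Fin n`. -/
def blockVector [DecidableEq ι] (e : ι × σ ↪ Fin n) (v : σ → ℝ) (j : ι) : Fin n → ℝ :=
  Function.extend e (fun q => if q.1 = j then v q.2 else 0) 0

theorem blockVector_apply [DecidableEq ι] (e : ι × σ ↪ Fin n) (v : σ → ℝ) (j i : ι) (s : σ) :
    blockVector e v j (e (i, s)) = if i = j then v s else 0 :=
  e.injective.extend_apply _ _ _

theorem sum_blockVector_mul [Fintype ι] [DecidableEq ι] (e : ι × σ ↪ Fin n) (v : σ → ℝ)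
    (j : ι) (s : ι → σ) (c : ι → ℝ) :
    ∑ i, blockVector e v j (e (i, s i)) * c i = v (s j) * c j := by
  simp [blockVector_apply]

theorem exists_shatters_sparseHalfSpaces_of_blocks [Fintype ι] [Fintype τ] (e : ι × σ ↪ Fin n)
    {v : τ → σ → ℝ} (hv : ∀ B : Set τ, ∃ s c, ∀ t, 0 ≤ v t s * c ↔ t ∈ B) :
    ∃ U : Finset (Fin n → ℝ), U.card = Fintype.card ι * Fintype.card τ ∧
      Shatters (sparseHalfSpaces n (Fintype.card ι)) U := by
  classical
  rw [← Fintype.card_prod]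
  refine exists_shatters_of_forall_exists_preimage_eq
    (u := fun p : ι × τ => blockVector e (v p.2) p.1) fun B => ?_
  choose s c hsc using fun j => hv {t | (j, t) ∈ B}
  refine ⟨_, ⟨_, sparse_sum_single (fun j => e (j, s j)) c, rfl⟩, ?_⟩
  ext ⟨j, t⟩
  rw [Set.mem_preimage, mem_halfSpace_sum_single, sum_blockVector_mul]
  exact hsc j t

end Blocks

section Signs

variable {κ : Type*} [DecidableEq κ]

/-- The rows of the matrix whose columns are the sign patterns on `κ`, encoded by the set of their
positive positions, extended by a leading entry `1` in position `none`. -/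
def signRow : Option κ → Finset κ → ℝ
  | none, _ => 1
  | some i, S => if i ∈ S then 1 else -1

theorem exists_signRow_mul_nonneg_iff [Finite κ] (B : Set (Option κ)) :
    ∃ S c, ∀ t, 0 ≤ signRow t S * c ↔ t ∈ B := by
  classical
  refine ⟨(Set.toFinite {i | some i ∈ B ↔ none ∈ B}).toFinset, if none ∈ B then 1 else -1, ?_⟩
  rintro (_ | i)
  · by_cases h : none ∈ B <;> simp [signRow, h]
  · by_cases h : none ∈ B <;> by_cases hi : some i ∈ B <;> simp [signRow, h, hi]

end Signs

theorem exists_shatters_sparseHalfSpaces {n k m : ℕ} (h : k * 2 ^ m ≤ n) :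
    ∃ U : Finset (Fin n → ℝ), U.card = k * (m + 1) ∧ Shatters (sparseHalfSpaces n k) U := by
  obtain ⟨e⟩ : Nonempty (Fin k × Finset (Fin m) ↪ Fin n) :=
    Function.Embedding.nonempty_of_card_le (by simpa using h)
  simpa using exists_shatters_sparseHalfSpaces_of_blocks e exists_signRow_mul_nonneg_iff

theorem pow_natFloor_logb_le {b x : ℝ} (hb : 1 < b) (hx : 1 ≤ x) : b ^ ⌊logb b x⌋₊ ≤ x := by
  rw [← rpow_natCast, ← le_logb_iff_rpow_le hb (by linarith)]
  exact Nat.floor_le (logb_nonneg hb hx)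

theorem vc_lower_bound (n k : ℕ) (hk1 : 1 ≤ k) (hkn : k ≤ n) :
    ∃ U : Finset (Fin n → ℝ),
      U.card = k * (Nat.floor (logb 2 ((n : ℝ) / (k : ℝ))) + 1) ∧
      Shatters {H | ∃ x : Fin n → ℝ, sparse n k x ∧ H = halfSpace n x} U := by
  have hk : (0 : ℝ) < k := by exact_mod_cast hk1
  have hle : (2 : ℝ) ^ ⌊logb 2 ((n : ℝ) / k)⌋₊ ≤ (n : ℝ) / k :=
    pow_natFloor_logb_le one_lt_two ((one_le_div hk).2 (by exact_mod_cast hkn))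
  rw [le_div_iff₀' hk] at hle
  exact exists_shatters_sparseHalfSpaces (by exact_mod_cast hle)
end
end

section
/- Let n ≥ 1, let μ be the standard Gaussian measure on ℝ^n (the product of n copies of N(0,1)), and let x, x̂ ∈ ℝ^n with ‖x‖₂ = ‖x̂‖₂ = 1. Let α := inf over θ ∈ (0, 2π) of (2/π)·θ/(1 − cos θ). Then ‖x̂ − x‖₂² ≤ (4/α) · μ{ a ∈ ℝ^n : (⟨a, x̂⟩ ≥ 0) does not hold if and only if (⟨a, x⟩ ≥ 0) holds }, i.e., the squared Euclidean distance between x̂ and x is bounded by 4/α times the probability that a random Gaussian vector a is classified differently by the half-spaces determined by x̂ and by x. -/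
open Real MeasureTheory

noncomputable section

/-!
The joint law of `⟪u, a⟫` and `⟪v, a⟫` for a standard Gaussian `a` depends only on the Gram matrix
of `u` and `v`. Hence unit vectors `u` and `v` at angle `θ` may be replaced by the complex numbers
`exp (± i θ / 2)`. The argument of a standard Gaussian on `ℂ` is uniform on `(-π, π)`, and the two
half-planes disagree on two arcs of length `θ` each, so the half-spaces of `u` and `v` disagree with
probability `θ / π` (Sheppard's formula). Since `‖u - v‖² = 2 (1 - cos θ)`, the bound is the
inequality `α (1 - cos θ) ≤ (2 / π) θ` defining `α`.
-/

open ProbabilityTheory InnerProductGeometry RealInnerProductSpace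

section GramMatrix

variable {E F : Type*} [NormedAddCommGroup E] [InnerProductSpace ℝ E] [NormedAddCommGroup F]
  [InnerProductSpace ℝ F] {ι : Type*} {u : ι → E} {v : ι → F}

lemma norm_sum_smul_eq_of_gram_eq [Fintype ι] (h : Matrix.gram ℝ u = Matrix.gram ℝ v) (c : ι → ℝ) :
    ‖∑ i, c i • u i‖ = ‖∑ i, c i • v i‖ := by
  rw [← sq_eq_sq₀ (norm_nonneg _) (norm_nonneg _), ← real_inner_self_eq_norm_sq,
    ← real_inner_self_eq_norm_sq, ← Matrix.star_dotProduct_gram_mulVec,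
    ← Matrix.star_dotProduct_gram_mulVec, h]

variable [FiniteDimensional ℝ E] [MeasurableSpace E] [BorelSpace E]
  [FiniteDimensional ℝ F] [MeasurableSpace F] [BorelSpace F]

lemma charFunDual_map_inner_stdGaussian [Fintype ι] (u : ι → E) (L : StrongDual ℝ (ι → ℝ)) :
    charFunDual ((stdGaussian E).map fun a i ↦ ⟪u i, a⟫) L =
      Complex.exp (-(‖∑ i, L (Pi.basisFun ℝ ι i) • u i‖ : ℂ) ^ 2 / 2) := by
  let A : E →L[ℝ] ι → ℝ := ContinuousLinearMap.pi fun i ↦ innerSL ℝ (u i)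
  have hLA : L.comp A = innerSL ℝ (∑ i, L (Pi.basisFun ℝ ι i) • u i) := by
    ext a
    rw [ContinuousLinearMap.comp_apply, ← (Pi.basisFun ℝ ι).sum_repr (A a)]
    simp [A, mul_comm]
  change charFunDual ((stdGaussian E).map A) L = _
  rw [charFunDual_map, hLA, charFunDual_stdGaussian, innerSL_apply_norm]

theorem map_inner_stdGaussian_eq_of_gram_eq [Finite ι]
    (h : Matrix.gram ℝ u = Matrix.gram ℝ v) :
    (stdGaussian E).map (fun a i ↦ ⟪u i, a⟫) = (stdGaussian F).map (fun b i ↦ ⟪v i, b⟫) := by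
  have := Fintype.ofFinite ι
  have := Measure.isProbabilityMeasure_map (μ := stdGaussian E) (f := fun a i ↦ ⟪u i, a⟫)
    (by fun_prop)
  have := Measure.isProbabilityMeasure_map (μ := stdGaussian F) (f := fun b i ↦ ⟪v i, b⟫)
    (by fun_prop)
  refine Measure.ext_of_charFunDual (funext fun L ↦ ?_)
  rw [charFunDual_map_inner_stdGaussian, charFunDual_map_inner_stdGaussian,
    norm_sum_smul_eq_of_gram_eq h]

end GramMatrix

section Plane

lemma stdGaussian_complex_eq_map_prod :
    stdGaussian ℂ =
      ((gaussianReal 0 1).prod (gaussianReal 0 1)).map Complex.measurableEquivRealProd.symm := by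
  rw [stdGaussian_eq_map_pi_orthonormalBasis Complex.orthonormalBasisOneI,
    ← (measurePreserving_finTwoArrow (gaussianReal 0 1)).symm.map_eq,
    Measure.map_map (by fun_prop) (by fun_prop)]
  congr 1
  ext p
  simp [Complex.mk_eq_add_mul_I, MeasurableEquiv.finTwoArrow]

lemma gaussianPDF_re_mul_gaussianPDF_im (z : ℂ) :
    gaussianPDF 0 1 z.re * gaussianPDF 0 1 z.im =
      ENNReal.ofReal ((2 * π)⁻¹ * exp (-‖z‖ ^ 2 / 2)) := by
  rw [gaussianPDF, gaussianPDF, ← ENNReal.ofReal_mul (gaussianPDFReal_nonneg _ _ _)]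
  simp only [gaussianPDFReal, NNReal.coe_one, mul_one, sub_zero]
  rw [mul_mul_mul_comm, ← exp_add, ← mul_inv, mul_self_sqrt (by positivity), Complex.sq_norm,
    Complex.normSq_apply]
  ring_nf

lemma stdGaussian_complex_eq_withDensity :
    stdGaussian ℂ = volume.withDensity fun z ↦
      ENNReal.ofReal ((2 * π)⁻¹ * exp (-‖z‖ ^ 2 / 2)) := by
  ext s hs
  rw [stdGaussian_complex_eq_map_prod, gaussianReal_of_var_ne_zero _ one_ne_zero,
    prod_withDensity (by fun_prop) (by fun_prop), MeasurableEquiv.map_apply,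
    withDensity_apply _ (Complex.measurableEquivRealProd.symm.measurable hs),
    withDensity_apply _ hs, ← Measure.volume_eq_prod,
    ← Complex.volume_preserving_equiv_real_prod.symm.setLIntegral_comp_preimage_emb
      (MeasurableEquiv.measurableEmbedding _)]
  simp only [← gaussianPDF_re_mul_gaussianPDF_im, Complex.measurableEquivRealProd_symm_apply]

theorem withDensity_norm_arg_preimage {f : ℝ → ENNReal} (hf : Measurable f) {s : Set ℝ}
    (hs : MeasurableSet s) :
    (volume.withDensity fun z : ℂ ↦ f ‖z‖) (Complex.arg ⁻¹' s) =
      (∫⁻ r in Set.Ioi 0, ENNReal.ofReal r * f r) * volume (Set.Ioo (-π) π ∩ s) := by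
  have hpolar : ∀ p ∈ polarCoord.target,
      ENNReal.ofReal p.1 • (Complex.arg ⁻¹' s).indicator (fun z ↦ f ‖z‖)
        (Complex.polarCoord.symm p) = ENNReal.ofReal p.1 * f p.1 * s.indicator 1 p.2 := by
    intro p hp
    obtain ⟨hr, ht⟩ := hp
    have harg : (Complex.polarCoord.symm p).arg = p.2 := by
      rw [Complex.polarCoord_symm_apply, Complex.ofReal_cos, Complex.ofReal_sin,
        Complex.arg_mul_cos_add_sin_mul_I hr (Set.Ioo_subset_Ioc_self ht)]
    have hnorm : ‖Complex.polarCoord.symm p‖ = p.1 := by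
      rw [Complex.norm_polarCoord_symm, abs_of_pos hr]
    by_cases h : p.2 ∈ s <;> simp [Set.indicator, harg, hnorm, h, -Complex.polarCoord_symm_apply]
  rw [withDensity_apply _ (Complex.measurable_arg hs),
    ← lintegral_indicator (Complex.measurable_arg hs), ← Complex.lintegral_comp_polarCoord_symm,
    setLIntegral_congr_fun polarCoord.open_target.measurableSet hpolar, polarCoord_target,
    Measure.volume_eq_prod, ← Measure.prod_restrict,
    lintegral_prod_mul (f := fun r ↦ ENNReal.ofReal r * f r) (by fun_prop) (by fun_prop),
    lintegral_indicator_one hs, Measure.restrict_apply hs, Set.inter_comm]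

theorem isUniform_arg_of_withDensity_norm {f : ℝ → ENNReal} (hf : Measurable f)
    [IsProbabilityMeasure (volume.withDensity fun z : ℂ ↦ f ‖z‖)] :
    pdf.IsUniform Complex.arg (Set.Ioo (-π) π) (volume.withDensity fun z : ℂ ↦ f ‖z‖) := by
  have hmass : (∫⁻ r in Set.Ioi 0, ENNReal.ofReal r * f r) * volume (Set.Ioo (-π) π) = 1 := by
    simpa using (withDensity_norm_arg_preimage hf MeasurableSet.univ).symm
  ext s hs
  rw [Measure.map_apply Complex.measurable_arg hs, withDensity_norm_arg_preimage hf hs,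
    cond_apply measurableSet_Ioo, ENNReal.eq_inv_of_mul_eq_one_left hmass]

theorem isUniform_arg_stdGaussian :
    pdf.IsUniform Complex.arg (Set.Ioo (-π) π) (stdGaussian ℂ) := by
  have hprob : IsProbabilityMeasure (stdGaussian ℂ) := inferInstance
  rw [stdGaussian_complex_eq_withDensity] at hprob ⊢
  exact isUniform_arg_of_withDensity_norm
    (f := fun r ↦ ENNReal.ofReal ((2 * π)⁻¹ * exp (-r ^ 2 / 2))) (by fun_prop)

end Plane

section Arcs

lemma cos_nonneg_iff_mem_Icc {t : ℝ} (ht : t ∈ Set.Ioo (-(3 * π / 2)) (3 * π / 2)) :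
    0 ≤ cos t ↔ t ∈ Set.Icc (-(π / 2)) (π / 2) := by
  refine ⟨fun hcos ↦ ?_, cos_nonneg_of_mem_Icc⟩
  contrapose! hcos
  rw [← cos_abs]
  have habs : |t| < 3 * π / 2 := abs_lt.2 ht
  refine cos_neg_of_pi_div_two_lt_of_lt ?_ (by linarith)
  rwa [Set.mem_Icc, ← abs_le, not_le] at hcos

theorem volume_setOf_cos_sub_nonneg_not_iff_cos_add_nonneg {h : ℝ} (hh : h ∈ Set.Icc 0 (π / 2)) :
    volume (Set.Ioo (-π) π ∩ {t | ¬(0 ≤ cos (t - h) ↔ 0 ≤ cos (t + h))}) =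
      ENNReal.ofReal (4 * h) := by
  obtain ⟨h0, h1⟩ := hh
  set A := Set.Ico (-(π / 2) - h) (-(π / 2) + h) ∪ Set.Ioc (π / 2 - h) (π / 2 + h)
  have hA : Set.Ioo (-π) π ∩ {t | ¬(0 ≤ cos (t - h) ↔ 0 ≤ cos (t + h))} =
      Set.Ioo (-π) π ∩ A := by
    ext t
    refine and_congr_right fun ⟨ht0, ht1⟩ ↦ ?_
    rw [Set.mem_ofPred_eq, cos_nonneg_iff_mem_Icc ⟨by linarith, by linarith⟩,
      cos_nonneg_iff_mem_Icc ⟨by linarith, by linarith⟩]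
    simp only [A, Set.mem_union, Set.mem_Icc, Set.mem_Ico, Set.mem_Ioc]
    grind
  have hsub : A ⊆ Set.Icc (-π) π := by
    rintro t (⟨_, _⟩ | ⟨_, _⟩) <;> constructor <;> linarith
  have hdisj : Disjoint (Set.Ico (-(π / 2) - h) (-(π / 2) + h))
      (Set.Ioc (π / 2 - h) (π / 2 + h)) :=
    Set.disjoint_left.2 fun t ht ht' ↦ by linarith [ht.2, ht'.1]
  rw [hA, measure_congr (Ioo_ae_eq_Icc.inter (ae_eq_refl A)), Set.inter_eq_right.2 hsub,
    measure_union hdisj measurableSet_Ioc, volume_Ico, volume_Ioc,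
    ← ENNReal.ofReal_add (by linarith) (by linarith)]
  ring_nf

end Arcs

section HalfSpace

variable {E F : Type*} [NormedAddCommGroup E] [InnerProductSpace ℝ E] [NormedAddCommGroup F]
  [InnerProductSpace ℝ F]

/-- The set of points on which the classifiers `a ↦ 0 ≤ ⟪u, a⟫` and `a ↦ 0 ≤ ⟪v, a⟫` disagree. Its
measure is the generalization error of one classifier relative to the other. -/
def halfSpaceDisagreement (u v : E) : Set E := {a | ¬(0 ≤ ⟪u, a⟫ ↔ 0 ≤ ⟪v, a⟫)}

lemma halfSpaceDisagreement_smul_smul {r s : ℝ} (hr : 0 < r) (hs : 0 < s) (u v : E) :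
    halfSpaceDisagreement (r • u) (s • v) = halfSpaceDisagreement u v := by
  simp only [halfSpaceDisagreement, real_inner_smul_left, mul_nonneg_iff_of_pos_left hr,
    mul_nonneg_iff_of_pos_left hs]

lemma inner_exp_mul_I_eq_norm_mul_cos (h : ℝ) (z : ℂ) :
    ⟪Complex.exp (h * Complex.I), z⟫ = ‖z‖ * cos (z.arg - h) := by
  rw [Complex.inner, ← Complex.exp_conj, cos_sub, mul_add, ← mul_assoc, ← mul_assoc,
    Complex.norm_mul_cos_arg, Complex.norm_mul_sin_arg]
  simp [Complex.exp_re, Complex.exp_im]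

lemma halfSpaceDisagreement_exp_mul_I (h : ℝ) :
    halfSpaceDisagreement (Complex.exp (h * Complex.I)) (Complex.exp ((-h : ℝ) * Complex.I)) =
      Complex.arg ⁻¹' {t | ¬(0 ≤ cos (t - h) ↔ 0 ≤ cos (t + h))} := by
  ext z
  rw [halfSpaceDisagreement, Set.mem_ofPred_eq, inner_exp_mul_I_eq_norm_mul_cos,
    inner_exp_mul_I_eq_norm_mul_cos, sub_neg_eq_add]
  rcases eq_or_ne z 0 with rfl | hz
  · simp
  · simp [mul_nonneg_iff_of_pos_left (norm_pos_iff.2 hz)]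

-- With the two vectors symmetric about the real axis, neither of the arcs of disagreement crosses
-- the branch cut of `Complex.arg`.
theorem stdGaussian_halfSpaceDisagreement_exp_mul_I {h : ℝ} (hh : h ∈ Set.Icc 0 (π / 2)) :
    stdGaussian ℂ (halfSpaceDisagreement (Complex.exp (h * Complex.I))
      (Complex.exp ((-h : ℝ) * Complex.I))) = ENNReal.ofReal (2 * h / π) := by
  have hvol : volume (Set.Ioo (-π) π) = ENNReal.ofReal (2 * π) := by rw [volume_Ioo]; ring_nf
  rw [halfSpaceDisagreement_exp_mul_I, isUniform_arg_stdGaussian.measure_preimage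
      (by simp [hvol, pi_pos]) (by simp) (by measurability),
    volume_setOf_cos_sub_nonneg_not_iff_cos_add_nonneg hh, hvol,
    ← ENNReal.ofReal_div_of_pos two_pi_pos]
  congr 1
  field_simp
  ring

variable [FiniteDimensional ℝ E] [MeasurableSpace E] [BorelSpace E]
  [FiniteDimensional ℝ F] [MeasurableSpace F] [BorelSpace F]

lemma stdGaussian_halfSpaceDisagreement_congr {u v : E} {u' v' : F} (hu : ‖u‖ = ‖u'‖)
    (hv : ‖v‖ = ‖v'‖) (huv : ⟪u, v⟫ = ⟪u', v'⟫) :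
    stdGaussian E (halfSpaceDisagreement u v) = stdGaussian F (halfSpaceDisagreement u' v') := by
  have hgram : Matrix.gram ℝ ![u, v] = Matrix.gram ℝ ![u', v'] := by
    ext i j
    fin_cases i <;> fin_cases j <;>
      simp [Matrix.gram_apply, hu, hv, huv, real_inner_comm u v, real_inner_comm u' v']
  have hS : MeasurableSet {p : Fin 2 → ℝ | ¬(0 ≤ p 0 ↔ 0 ≤ p 1)} := by measurability
  have hlaw := congrArg (fun ν : Measure (Fin 2 → ℝ) ↦ ν {p | ¬(0 ≤ p 0 ↔ 0 ≤ p 1)})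
    (map_inner_stdGaussian_eq_of_gram_eq hgram)
  rwa [Measure.map_apply (by fun_prop) hS, Measure.map_apply (by fun_prop) hS] at hlaw

theorem stdGaussian_halfSpaceDisagreement {u v : E} (hu : u ≠ 0) (hv : v ≠ 0) :
    stdGaussian E (halfSpaceDisagreement u v) = ENNReal.ofReal (angle u v / π) := by
  wlog hnorm : ‖u‖ = 1 ∧ ‖v‖ = 1 generalizing u v
  · have hu' := inv_pos.2 (norm_pos_iff.2 hu)
    have hv' := inv_pos.2 (norm_pos_iff.2 hv)
    rw [← halfSpaceDisagreement_smul_smul hu' hv', this (smul_ne_zero hu'.ne' hu)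
      (smul_ne_zero hv'.ne' hv) ⟨norm_smul_inv_norm hu, norm_smul_inv_norm hv⟩,
      angle_smul_left_of_pos _ _ hu', angle_smul_right_of_pos _ _ hv']
  obtain ⟨hu1, hv1⟩ := hnorm
  set h := angle u v / 2
  have hangle : angle u v = 2 * h := (mul_div_cancel₀ _ two_ne_zero).symm
  have hinner : ⟪u, v⟫ = ⟪Complex.exp (h * Complex.I), Complex.exp ((-h : ℝ) * Complex.I)⟫ := by
    rw [inner_eq_cos_angle_of_norm_eq_one hu1 hv1, hangle, ← cos_neg,
      ← Complex.exp_ofReal_mul_I_re, Complex.inner, ← Complex.exp_conj, ← Complex.exp_add]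
    congr 2
    simp only [Complex.ofReal_neg, Complex.ofReal_mul, Complex.ofReal_ofNat, map_mul,
      Complex.conj_ofReal, Complex.conj_I]
    ring
  rw [stdGaussian_halfSpaceDisagreement_congr (by rw [hu1, Complex.norm_exp_ofReal_mul_I])
      (by rw [hv1, Complex.norm_exp_ofReal_mul_I]) hinner,
    stdGaussian_halfSpaceDisagreement_exp_mul_I, hangle]
  constructor <;> linarith [angle_nonneg u v, angle_le_pi u v]

end HalfSpace

section GoemansWilliamson

/-- The constant `α = inf_{0 < θ < 2π} (2 / π) θ / (1 - cos θ)`, which is the approximation ratio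
of the Goemans–Williamson algorithm for the maximum cut problem. -/
def goemansWilliamsonConst : ℝ :=
  sInf ((fun θ : ℝ ↦ (2 / π) * θ / (1 - cos θ)) '' Set.Ioo 0 (2 * π))

lemma one_sub_cos_pos {θ : ℝ} (hθ : θ ∈ Set.Ioo 0 (2 * π)) : 0 < 1 - cos θ := by
  refine sub_pos.2 ((cos_le_one θ).lt_of_ne fun h ↦ hθ.1.ne' ?_)
  exact (cos_eq_one_iff_of_lt_of_lt (by linarith [hθ.1, pi_pos]) hθ.2).1 h

lemma two_div_pi_sq_mem_lowerBounds :
    2 / π ^ 2 ∈ lowerBounds ((fun θ : ℝ ↦ (2 / π) * θ / (1 - cos θ)) '' Set.Ioo 0 (2 * π)) := by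
  rintro _ ⟨θ, hθ, rfl⟩
  rw [le_div_iff₀ (one_sub_cos_pos hθ)]
  calc 2 / π ^ 2 * (1 - cos θ) ≤ 2 / π ^ 2 * (θ ^ 2 / 2) := by
        gcongr
        linarith [one_sub_sq_div_two_le_cos (x := θ)]
    _ = θ / π ^ 2 * θ := by ring
    _ ≤ 2 * π / π ^ 2 * θ := by
        have := hθ.1.le
        gcongr
        exact hθ.2.le
    _ = 2 / π * θ := by field_simp

lemma goemansWilliamsonConst_pos : 0 < goemansWilliamsonConst :=
  (by positivity : 0 < 2 / π ^ 2).trans_le <|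
    le_csInf ((Set.nonempty_Ioo.2 two_pi_pos).image _) two_div_pi_sq_mem_lowerBounds

theorem goemansWilliamsonConst_mul_one_sub_cos_le {θ : ℝ} (hθ : θ ∈ Set.Ico 0 (2 * π)) :
    goemansWilliamsonConst * (1 - cos θ) ≤ 2 / π * θ := by
  obtain ⟨h0, h1⟩ := hθ
  rcases h0.eq_or_lt with rfl | hpos
  · simp
  · rw [← le_div_iff₀ (one_sub_cos_pos ⟨hpos, h1⟩)]
    exact csInf_le ⟨_, two_div_pi_sq_mem_lowerBounds⟩ ⟨θ, ⟨hpos, h1⟩, rfl⟩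

end GoemansWilliamson

theorem dist_sq_le_generalization_error_general {E : Type*} [NormedAddCommGroup E]
    [InnerProductSpace ℝ E] [FiniteDimensional ℝ E] [MeasurableSpace E] [BorelSpace E]
    {u v : E} (hu : ‖u‖ = 1) (hv : ‖v‖ = 1) :
    ‖u - v‖ ^ 2 ≤
      4 / goemansWilliamsonConst * (stdGaussian E).real (halfSpaceDisagreement u v) := by
  have herror : (stdGaussian E).real (halfSpaceDisagreement u v) = angle u v / π := by
    rw [measureReal_def, stdGaussian_halfSpaceDisagreement (norm_ne_zero_iff.1 (by simp [hu]))
      (norm_ne_zero_iff.1 (by simp [hv])),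
      ENNReal.toReal_ofReal (div_nonneg (angle_nonneg u v) pi_pos.le)]
  have hangle : angle u v ∈ Set.Ico 0 (2 * π) :=
    ⟨angle_nonneg u v, (angle_le_pi u v).trans_lt (by linarith [pi_pos])⟩
  calc ‖u - v‖ ^ 2 = 2 * (1 - cos (angle u v)) := by
        rw [norm_sub_sq_real, hu, hv, inner_eq_cos_angle_of_norm_eq_one hu hv]; ring
    _ ≤ 2 * (2 / π * angle u v / goemansWilliamsonConst) := by
        gcongr
        rw [le_div_iff₀' goemansWilliamsonConst_pos]
        exact goemansWilliamsonConst_mul_one_sub_cos_le hangle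
    _ = 4 / goemansWilliamsonConst * (stdGaussian E).real (halfSpaceDisagreement u v) := by
        rw [herror]; ring

theorem dist_sq_le_generalization_error (n : ℕ) (hn : 1 ≤ n)
    (x xh : Fin n → ℝ) (hx : ∑ i, (x i) ^ 2 = 1) (hxh : ∑ i, (xh i) ^ 2 = 1) :
    ∑ i, (xh i - x i) ^ 2 ≤
      (4 / sInf ((fun θ : ℝ => (2 / π) * θ / (1 - Real.cos θ)) '' Set.Ioo 0 (2 * π))) *
        ((Measure.pi fun _ : Fin n => ProbabilityTheory.gaussianReal 0 1)
          {a : Fin n → ℝ | ¬ ((0 ≤ ∑ i, a i * xh i) ↔ (0 ≤ ∑ i, a i * x i))}).toReal := by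
  have := dist_sq_le_generalization_error_general (u := WithLp.toLp 2 xh) (v := WithLp.toLp 2 x)
    (by simp [EuclideanSpace.norm_eq, hxh]) (by simp [EuclideanSpace.norm_eq, hx])
  rw [← map_pi_eq_stdGaussian, ← MeasurableEquiv.coe_toLp, measureReal_def,
    MeasurableEquiv.map_apply] at this
  simpa [EuclideanSpace.real_norm_sq_eq, halfSpaceDisagreement, PiLp.inner_apply,
    goemansWilliamsonConst] using this
end
end

section
/- For every real θ with 0 < θ < 2π, one has (2/π)·θ/(1 − cos θ) > 0.87856. -/
open Real

/-!
Let `π / 2 ≤ φ ≤ π`. On `[π / 2, ∞)` the graph of `1 - cos` lies below its tangent line at `φ`,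
by concavity to the left of `φ`, and if `1 - cos φ ≤ sin φ * φ` then that line lies below the line
of slope `sin φ` through the origin; on `[0, π / 2]` Jordan's inequality suffices. Hence
`1 - cos θ ≤ sin φ * θ` for all `θ ≥ 0`. With `t = tan (φ / 2)` the condition on `φ` reads
`t ≤ 2 * arctan t`, and the slope `sin φ = 2 * t / (1 + t ^ 2)` is rational in `t`. Equality holds
at `t = 2.33112…` and gives the optimal constant `0.878567…`; the slightly smaller `t = 2.3311` is
good enough for `0.87856`.
-/

lemma sin_le_sin_add_cos_mul_sub {a x : ℝ} (ha₀ : 0 ≤ a) (ha : a ≤ π / 2) (hx : 0 ≤ x) :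
    sin x ≤ sin a + cos a * (x - a) := by
  rcases lt_or_ge x a with hxa | hax
  · have hslope : cos a ≤ (sin a - sin x) / (a - x) := by
      rw [← slope_def_field]
      exact strictConcaveOn_sin_Icc.concaveOn.le_slope_of_hasDerivAt
        ⟨hx, by linarith⟩ ⟨ha₀, by linarith⟩ hxa (hasDerivAt_sin a)
    rw [le_div_iff₀ (sub_pos.2 hxa)] at hslope
    linarith
  -- Concavity would restrict to `x ≤ π`; the addition formula does not.
  · have hsin_a : 0 ≤ sin a := sin_nonneg_of_nonneg_of_le_pi ha₀ (by linarith)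
    have hcos_a : 0 ≤ cos a := cos_nonneg_of_neg_pi_div_two_le_of_le (by linarith) ha
    calc sin x = sin a * cos (x - a) + cos a * sin (x - a) := by rw [← sin_add]; ring_nf
      _ ≤ sin a * 1 + cos a * (x - a) := by
        gcongr
        · exact cos_le_one _
        · exact sin_le (sub_nonneg.2 hax)
      _ = sin a + cos a * (x - a) := by ring

lemma cos_sub_sin_mul_sub_le_cos {φ θ : ℝ} (hφ₀ : π / 2 ≤ φ) (hφ : φ ≤ π) (hθ : π / 2 ≤ θ) :
    cos φ - sin φ * (θ - φ) ≤ cos θ := by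
  have h := sin_le_sin_add_cos_mul_sub (a := φ - π / 2) (x := θ - π / 2)
    (by linarith) (by linarith) (by linarith)
  rw [sin_sub_pi_div_two, sin_sub_pi_div_two, cos_sub_pi_div_two, sub_sub_sub_cancel_right] at h
  linarith

lemma one_sub_cos_le_sin_mul {φ θ : ℝ} (hφ₀ : π / 2 ≤ φ) (hφ : φ ≤ π)
    (hφ_tangent : 1 - cos φ ≤ sin φ * φ) (hθ : 0 ≤ θ) : 1 - cos θ ≤ sin φ * θ := by
  have of_pi_div_two_le {x : ℝ} (hx : π / 2 ≤ x) : 1 - cos x ≤ sin φ * x := by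
    linarith [cos_sub_sin_mul_sub_le_cos hφ₀ hφ hx]
  rcases le_total (π / 2) θ with h | h
  · exact of_pi_div_two_le h
  · have hslope : 2 / π ≤ sin φ := by
      rw [div_le_iff₀ pi_pos]
      linarith [of_pi_div_two_le le_rfl, cos_pi_div_two]
    calc 1 - cos θ ≤ 2 / π * θ := by linarith [one_sub_mul_le_cos hθ h]
      _ ≤ sin φ * θ := by gcongr

lemma sin_two_mul_arctan (t : ℝ) : sin (2 * arctan t) = 2 * t / (1 + t ^ 2) := by
  rw [sin_eq_two_mul_tan_half_div_one_add_tan_half_sq, mul_div_cancel_left₀ _ two_ne_zero,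
    tan_arctan]

lemma one_sub_cos_two_mul_arctan (t : ℝ) :
    1 - cos (2 * arctan t) = 2 * t / (1 + t ^ 2) * t := by
  rw [cos_two_mul, cos_sq_arctan]
  field_simp
  ring

lemma one_sub_cos_le_of_le_two_mul_arctan {t θ : ℝ} (ht₁ : 1 ≤ t) (ht : t ≤ 2 * arctan t)
    (hθ : 0 ≤ θ) : 1 - cos θ ≤ 2 * t / (1 + t ^ 2) * θ := by
  have hφ₀ : π / 2 ≤ 2 * arctan t := by
    linarith [arctan_mono ht₁, arctan_one]
  have hφ : 2 * arctan t ≤ π := by linarith [arctan_lt_pi_div_two t]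
  rw [← sin_two_mul_arctan]
  refine one_sub_cos_le_sin_mul hφ₀ hφ ?_ hθ
  rw [one_sub_cos_two_mul_arctan, sin_two_mul_arctan]
  gcongr

lemma arctan_le_sum_range {x : ℝ} (hx₀ : 0 ≤ x) (hx : x < 1) (k : ℕ) :
    arctan x ≤ ∑ i ∈ Finset.range (2 * k + 1), (-1) ^ i * (x ^ (2 * i + 1) / (2 * i + 1)) := by
  have hanti : Antitone fun i : ℕ ↦ x ^ (2 * i + 1) / (2 * i + 1 : ℝ) := fun i j hij ↦ by
    have hpow : x ^ (2 * j + 1) ≤ x ^ (2 * i + 1) :=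
      pow_le_pow_of_le_one hx₀ hx.le (by lia)
    dsimp only
    gcongr
  refine hanti.tendsto_le_alternating_series ?_ k
  have hsum := (hasSum_arctan (x := x) (by rwa [norm_of_nonneg hx₀])).tendsto_sum_nat
  simpa only [mul_div_assoc, Nat.cast_add, Nat.cast_mul, Nat.cast_ofNat, Nat.cast_one] using hsum

lemma two_point_3311_le_two_mul_arctan : (2.3311 : ℝ) ≤ 2 * arctan 2.3311 := by
  have hinv : arctan (2.3311 : ℝ)⁻¹ = π / 2 - arctan 2.3311 := arctan_inv_of_pos (by norm_num)
  have hseries : arctan (2.3311 : ℝ)⁻¹ ≤ 0.405246 := by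
    refine (arctan_le_sum_range (by norm_num) (by norm_num) 3).trans ?_
    norm_num [Finset.sum_range_succ]
  linarith [pi_gt_d6]

theorem gw_constant_bound_general (θ : ℝ) (h0 : 0 < θ) (hcos : cos θ ≠ 1) :
    0.87856 < (2 / π) * θ / (1 - cos θ) := by
  have hpos : 0 < 1 - cos θ := sub_pos.2 ((cos_le_one θ).lt_of_ne hcos)
  have hslope : 0.87856 * (2 * 2.3311 / (1 + 2.3311 ^ 2)) < 2 / π := by
    rw [lt_div_iff₀ pi_pos]
    linarith [pi_lt_d6]
  rw [lt_div_iff₀ hpos]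
  calc 0.87856 * (1 - cos θ)
      ≤ 0.87856 * (2 * 2.3311 / (1 + 2.3311 ^ 2) * θ) := by
        gcongr
        exact one_sub_cos_le_of_le_two_mul_arctan (by norm_num)
          two_point_3311_le_two_mul_arctan h0.le
    _ = 0.87856 * (2 * 2.3311 / (1 + 2.3311 ^ 2)) * θ := by ring
    _ < 2 / π * θ := by gcongr

theorem gw_constant_bound (θ : ℝ) (h0 : 0 < θ) (h2 : θ < 2 * π) :
    0.87856 < (2 / π) * θ / (1 - Real.cos θ) :=
  gw_constant_bound_general θ h0 fun hcos ↦
    h0.ne' ((cos_eq_one_iff_of_lt_of_lt (by linarith) h2).1 hcos)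
end

section
/- Let (X, S) be a measurable space, P a probability measure on X, α ∈ [0, 1], and let P_N := P ⊗ B(α) be the product of P with the measure on {0,1} giving probability α to 1 and 1−α to 0. Then for all measurable sets T, F ⊆ X, the noisy generalization error satisfies J_N(T,F) = α + (1 − 2α)·P(T Δ F), where J_N(T,F) := ∫ | |1_T(c) − ω| − 1_F(c) | dP_N(c, ω). -/
open Real MeasureTheory

noncomputable section

/-- The measure on `{0,1}` (modelled as `Bool`) giving probability `α` to `1` (`true`)
and `1 - α` to `0` (`false`). -/
def bern (α : ℝ) : Measure Bool :=
  α.toNNReal • Measure.dirac true + (1 - α).toNNReal • Measure.dirac false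

open ProbabilityTheory
open scoped symmDiff unitInterval

section Indicator

variable {X G : Type*} [AddCommGroup G] [Lattice G] [IsOrderedAddMonoid G]

theorem abs_indicator_sub_indicator {f : X → G} (hf : 0 ≤ f) (s t : Set X) (x : X) :
    |s.indicator f x - t.indicator f x| = (s ∆ t).indicator f x := by
  rw [← Set.abs_indicator_symmDiff, abs_of_nonneg (Set.indicator_nonneg (fun y _ => hf y) x)]

-- Flipping a label is symmetric difference with `univ`, which can be moved past `∆ t`.
theorem abs_abs_indicator_sub_ite_sub_indicator {f : X → G} (hf : 0 ≤ f) (s t : Set X) (q : Prop)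
    [Decidable q] (x : X) :
    |(|s.indicator f x - if q then f x else 0|) - t.indicator f x|
      = (if q then (s ∆ t)ᶜ else s ∆ t).indicator f x := by
  split_ifs
  · have symmDiff_univ (r : Set X) : r ∆ Set.univ = rᶜ := by
      rw [← Set.top_eq_univ, symmDiff_top, hnot_eq_compl]
    have flipped_label : |s.indicator f x - f x| = (s ∆ Set.univ).indicator f x := by
      simpa only [Set.indicator_univ] using abs_indicator_sub_indicator hf s Set.univ x
    rw [flipped_label, abs_indicator_sub_indicator hf, symmDiff_right_comm, symmDiff_univ]
  · rw [sub_zero, abs_of_nonneg (Set.indicator_nonneg (fun y _ => hf y) x),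
      abs_indicator_sub_indicator hf]

end Indicator

section BernoulliProduct

theorem bern_eq_bernoulliMeasure (p : I) : bern p = Ber(true, false, p) := by
  have toNNReal_eq (q : I) : (q : ℝ).toNNReal = unitInterval.toNNReal q :=
    Real.toNNReal_of_nonneg q.2.1
  rw [bern, bernoulliMeasure_def, ← unitInterval.coe_symm_eq, toNNReal_eq, toNNReal_eq]

variable {X Y E : Type*} [MeasurableSpace X] [MeasurableSpace Y]

theorem prod_bernoulliMeasure (μ : Measure X) [SFinite μ] (y z : Y) (p : I) :
    μ.prod Ber(y, z, p) = unitInterval.toNNReal p • μ.map (fun x => (x, y)) +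
      unitInterval.toNNReal (σ p) • μ.map (fun x => (x, z)) := by
  rw [bernoulliMeasure_def, Measure.prod_add, Measure.prod_smul_right, Measure.prod_smul_right,
    Measure.prod_dirac, Measure.prod_dirac]

theorem integral_prod_bernoulliMeasure [MeasurableSingletonClass Y] [NormedAddCommGroup E]
    [NormedSpace ℝ E] {μ : Measure X} [SFinite μ] {y z : Y} (p : I) {f : X × Y → E}
    (hy : Integrable (fun x => f (x, y)) μ) (hz : Integrable (fun x => f (x, z)) μ) :
    ∫ w, f w ∂(μ.prod Ber(y, z, p))
      = (p : ℝ) • ∫ x, f (x, y) ∂μ + (1 - p : ℝ) • ∫ x, f (x, z) ∂μ := by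
  have emb (c : Y) : MeasurableEmbedding (fun x : X => (x, c)) :=
    measurableEmbedding_prod_mk_right c
  have int_y : Integrable f (μ.map fun x => (x, y)) := (emb y).integrable_map_iff.2 hy
  have int_z : Integrable f (μ.map fun x => (x, z)) := (emb z).integrable_map_iff.2 hz
  rw [prod_bernoulliMeasure, integral_add_measure int_y.smul_measure_nnreal
    int_z.smul_measure_nnreal, integral_smul_nnreal_measure, integral_smul_nnreal_measure,
    (emb y).integral_map, (emb z).integral_map,
    NNReal.smul_def, NNReal.smul_def, unitInterval.coe_toNNReal, unitInterval.coe_toNNReal,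
    unitInterval.coe_symm_eq]

end BernoulliProduct

theorem integral_indicator_one_of_nullMeasurableSet {X : Type*} [MeasurableSpace X] {μ : Measure X}
    {s : Set X} (hs : NullMeasurableSet s μ) :
    ∫ x, s.indicator (fun _ => (1 : ℝ)) x ∂μ = μ.real s := by
  rw [integral_indicator₀ hs, setIntegral_const, smul_eq_mul, mul_one]

theorem noisy_generalization_error_formula_general {X : Type*} [MeasurableSpace X]
    (P : Measure X) [IsFiniteMeasure P] (α : ℝ) (hα : α ∈ Set.Icc (0 : ℝ) 1)
    (T F : Set X) (hTF : NullMeasurableSet (T ∆ F) P) :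
    (∫ p : X × Bool,
        |(|T.indicator (fun _ => (1 : ℝ)) p.1 - (if p.2 then (1 : ℝ) else 0)|) -
          F.indicator (fun _ => (1 : ℝ)) p.1| ∂(P.prod (bern α)))
      = α * P.real Set.univ + (1 - 2 * α) * P.real (T ∆ F) := by
  have integrable_of {s : Set X} (hs : NullMeasurableSet s P) :
      Integrable (s.indicator fun _ => (1 : ℝ)) P := (integrable_const 1).indicator₀ hs
  calc
    _ = ∫ p : X × Bool, (if p.2 then (T ∆ F)ᶜ else T ∆ F).indicator (fun _ => (1 : ℝ)) p.1
          ∂(P.prod Ber(true, false, ⟨α, hα⟩)) := by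
      rw [← bern_eq_bernoulliMeasure]
      exact integral_congr_ae <| .of_forall fun p =>
        abs_abs_indicator_sub_ite_sub_indicator (fun _ => zero_le_one) T F (p.2 = true) p.1
    _ = α * ∫ x, (T ∆ F)ᶜ.indicator (fun _ => (1 : ℝ)) x ∂P +
          (1 - α) * ∫ x, (T ∆ F).indicator (fun _ => (1 : ℝ)) x ∂P :=
      integral_prod_bernoulliMeasure ⟨α, hα⟩ (integrable_of hTF.compl) (integrable_of hTF)
    _ = α * (P.real Set.univ - P.real (T ∆ F)) + (1 - α) * P.real (T ∆ F) := by
      rw [integral_indicator_one_of_nullMeasurableSet hTF.compl,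
        integral_indicator_one_of_nullMeasurableSet hTF, measureReal_compl₀ hTF]
    _ = α * P.real Set.univ + (1 - 2 * α) * P.real (T ∆ F) := by ring

theorem noisy_generalization_error_formula {X : Type*} [MeasurableSpace X]
    (P : Measure X) [IsProbabilityMeasure P]
    (α : ℝ) (hα : α ∈ Set.Icc (0 : ℝ) 1)
    (T F : Set X) (hT : MeasurableSet T) (hF : MeasurableSet F) :
    (∫ p : X × Bool,
        |(|T.indicator (fun _ => (1 : ℝ)) p.1 - (if p.2 then (1 : ℝ) else 0)|) -
          F.indicator (fun _ => (1 : ℝ)) p.1| ∂(P.prod (bern α)))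
      = α + (1 - 2 * α) * (P (symmDiff T F)).toReal := by
  rw [noisy_generalization_error_formula_general P α hα T F (hT.symmDiff hF).nullMeasurableSet,
    probReal_univ, mul_one, measureReal_def]
end
end
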